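/- Let F(z, w) = (z + (1/2)z²w, w + (1/2)zw²) and g(ζ) = ζ·(1 + (1/2)ζ)². For every (z, w) ∈ ℂ² \ {(0,0)}: F^n(z, w) → (0, 0) as n → ∞ if and only if zw ≠ 0 and g^n(zw) → 0 as n → ∞. In other words, the basin of attraction of F is Ω_F = {(z, w) ∈ ℂ² : zw ∈ C̃}, where C̃ = {ζ ∈ ℂ \ {0} : g^n(ζ) → 0} is the basin of attraction of g. -/

import Mathlib

/-!
Both coordinates of `F (z, w)` are multiplied by the same factor `1 + zw / 2`. Hence the product
`zw` evolves under `g` (`Fex_iterate_mul`), and the ratio `z : w` is invariant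
(`Fex_iterate_cross`). With `(zₙ, wₙ) = F^[n] (z, w)` this gives `zₙ² w = z g^[n](zw)` and
`wₙ² z = w g^[n](zw)`, so for `zw ≠ 0` the convergence of `g^[n](zw)` to `0` forces that of `zₙ` and
`wₙ`. Conversely `zₙ, wₙ → 0` gives `g^[n](zw) = zₙ wₙ → 0`, and `zw = 0` is excluded because every
point of the axes is fixed by `F`.
-/

open Filter Set

/-- The map `F(z, w) = (z + (1/2)z²w, w + (1/2)zw²) = (z, w)·(1 + (1/2)zw)`. -/
noncomputable def Fex (p : ℂ × ℂ) : ℂ × ℂ :=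
  (p.1 + (1 / 2) * p.1 ^ 2 * p.2, p.2 + (1 / 2) * p.1 * p.2 ^ 2)

/-- The one-variable polynomial `g(ζ) = ζ·(1 + (1/2)ζ)²`. -/
noncomputable def gex (ζ : ℂ) : ℂ := ζ * (1 + (1 / 2) * ζ) ^ 2

/-- The basin of attraction `Ω_F = {p ∈ ℂ² \ {0} : F^[n] p → 0}`. -/
noncomputable def basinFex : Set (ℂ × ℂ) :=
  {p | p ≠ 0 ∧ Tendsto (fun n => Fex^[n] p) atTop (nhds 0)}

/-- The one-variable basin `C̃ = {ζ ∈ ℂ \ {0} : g^[n] ζ → 0}`. -/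
noncomputable def Ctilde : Set ℂ :=
  {ζ | ζ ≠ 0 ∧ Tendsto (fun n => gex^[n] ζ) atTop (nhds 0)}

theorem Fex_iterate_mul (p : ℂ × ℂ) (n : ℕ) :
    (Fex^[n] p).1 * (Fex^[n] p).2 = gex^[n] (p.1 * p.2) := by
  induction n with
  | zero => rfl
  | succ n ih =>
    rw [Function.iterate_succ_apply', Function.iterate_succ_apply', ← ih]
    simp only [Fex, gex]
    ring

/-- The point `F^[n] p` is proportional to `p`. -/
theorem Fex_iterate_cross (p : ℂ × ℂ) (n : ℕ) :
    (Fex^[n] p).1 * p.2 = (Fex^[n] p).2 * p.1 := by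
  induction n with
  | zero => exact mul_comm _ _
  | succ n ih =>
    rw [Function.iterate_succ_apply']
    simp only [Fex]
    linear_combination (1 + (1 / 2) * ((Fex^[n] p).1 * (Fex^[n] p).2)) * ih

theorem Fex_fixed_of_mul_eq_zero {p : ℂ × ℂ} (h : p.1 * p.2 = 0) : Fex p = p := by
  ext
  · simp only [Fex]
    linear_combination (1 / 2) * p.1 * h
  · simp only [Fex]
    linear_combination (1 / 2) * p.2 * h

theorem tendsto_zero_of_sq_eq {u v : ℕ → ℂ} {c : ℂ} (hv : Tendsto v atTop (nhds 0))
    (h : ∀ n, u n ^ 2 = c * v n) : Tendsto u atTop (nhds 0) := by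
  have h2 : Tendsto (fun n => u n ^ 2) atTop (nhds 0) := by
    simpa [h] using hv.const_mul c
  rw [tendsto_zero_iff_norm_tendsto_zero] at h2 ⊢
  simpa [norm_pow] using h2.sqrt

theorem Fex_tendsto_iff (p : ℂ × ℂ) (hp : p ≠ 0) :
    Tendsto (fun n => Fex^[n] p) atTop (nhds 0) ↔
      p.1 * p.2 ≠ 0 ∧ Tendsto (fun n => gex^[n] (p.1 * p.2)) atTop (nhds 0) := by
  constructor
  · intro h
    refine ⟨fun h0 => hp ?_, ?_⟩
    · simp only [Function.iterate_fixed (Fex_fixed_of_mul_eq_zero h0)] at h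
      exact tendsto_nhds_unique tendsto_const_nhds h
    · simp only [← Fex_iterate_mul]
      simpa using h.fst_nhds.mul h.snd_nhds
  · rintro ⟨h0, h⟩
    have hz : p.1 ≠ 0 := left_ne_zero_of_mul h0
    have hw : p.2 ≠ 0 := right_ne_zero_of_mul h0
    refine Tendsto.prodMk_nhds (mx := fun n => (Fex^[n] p).1) (my := fun n => (Fex^[n] p).2)
      (tendsto_zero_of_sq_eq (c := p.1 / p.2) h fun n => ?_)
      (tendsto_zero_of_sq_eq (c := p.2 / p.1) h fun n => ?_)
    · rw [← Fex_iterate_mul]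
      field_simp
      linear_combination (Fex^[n] p).1 * Fex_iterate_cross p n
    · rw [← Fex_iterate_mul]
      field_simp
      linear_combination -(Fex^[n] p).2 * Fex_iterate_cross p n

/-- For every `(z, w) ∈ ℂ² \ {0}`, `F^[n](z, w) → 0` iff `zw ≠ 0` and
`g^[n](zw) → 0`; in other words, the basin of `F` is `{(z, w) : zw ∈ C̃}`. -/
theorem basinFex_eq :
    (∀ p : ℂ × ℂ, p ≠ 0 →
      (Tendsto (fun n => Fex^[n] p) atTop (nhds 0) ↔
        p.1 * p.2 ≠ 0 ∧ Tendsto (fun n => gex^[n] (p.1 * p.2)) atTop (nhds 0))) ∧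
    basinFex = {p : ℂ × ℂ | p.1 * p.2 ∈ Ctilde} := by
  refine ⟨Fex_tendsto_iff, ?_⟩
  ext p
  constructor
  · rintro ⟨hp, h⟩
    exact (Fex_tendsto_iff p hp).1 h
  · rintro ⟨h0, h⟩
    have hp : p ≠ 0 := by
      rintro rfl
      simp at h0
    exact ⟨hp, (Fex_tendsto_iff p hp).2 ⟨h0, h⟩⟩
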